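/- Let f : E → [0,∞] be upper semicontinuous and strictly upper radial, let x* ∈ E with 0 < f(x*) < ∞ and let C > 0, and suppose the global sharpness bound f(x) ≤ max(f(x*) − C·‖x − x*‖, 0) holds for all x ∈ E. Then, with y* = x*/f(x*), for every y ∈ E one has f^Γ(y) ≥ 1/f(x*) + (C/(C·‖x*‖ + f(x*)))·‖y − y*‖. -/

import Mathlib

open scoped ENNReal RealInnerProductSpace Pointwise
open Metric Set

variable {E : Type*} [NormedAddCommGroup E] [InnerProductSpace ℝ E] [FiniteDimensional ℝ E]

/-- The hypograph of `f`, viewed inside `E × (0,∞)`. -/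
def hypo (f : E → ℝ≥0∞) : Set (E × ℝ) := {p | 0 < p.2 ∧ ENNReal.ofReal p.2 ≤ f p.1}

/-- The epigraph of `f`, viewed inside `E × (0,∞)`. -/
def epigraph (f : E → ℝ≥0∞) : Set (E × ℝ) := {p | 0 < p.2 ∧ f p.1 ≤ ENNReal.ofReal p.2}

/-- `f` is upper semicontinuous: its hypograph is closed in `E × (0,∞)`. -/
def IsUSC (f : E → ℝ≥0∞) : Prop := closure (hypo f) ∩ {p : E × ℝ | 0 < p.2} ⊆ hypo f

/-- The perspective function `(y, v) ↦ v ⬝ f(y/v)`. -/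
noncomputable def persp (f : E → ℝ≥0∞) (p : E × ℝ) : ℝ≥0∞ :=
  ENNReal.ofReal p.2 * f (p.2⁻¹ • p.1)

/-- `f` is upper radial: its perspective function is u.s.c. on `E × (0,∞)` and
nondecreasing in `v`. -/
def UpperRadial (f : E → ℝ≥0∞) : Prop :=
  UpperSemicontinuousOn (persp f) {p : E × ℝ | 0 < p.2} ∧
  ∀ (y : E) (v v' : ℝ), 0 < v → v ≤ v' → persp f (y, v) ≤ persp f (y, v')

/-- `f` is strictly upper radial. -/
def StrictlyUpperRadial (f : E → ℝ≥0∞) : Prop :=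
  UpperRadial f ∧ ∀ (y : E) (v v' : ℝ), 0 < v → v < v' →
    0 < persp f (y, v) → persp f (y, v) < ⊤ → persp f (y, v) < persp f (y, v')

/-- The upper radial transformation `f^Γ(y) = sup{v > 0 : v ⬝ f(y/v) ≤ 1}` (`sup ∅ = 0`). -/
noncomputable def radial (f : E → ℝ≥0∞) (y : E) : ℝ≥0∞ :=
  ⨆ (v : ℝ) (_ : 0 < v ∧ persp f (y, v) ≤ 1), ENNReal.ofReal v

/-- The Euclidean norm on `E × ℝ`. -/
noncomputable def pnorm (p : E × ℝ) : ℝ := Real.sqrt (‖p.1‖ ^ 2 + p.2 ^ 2)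

/-- `w` is a proximal normal to `S` at `z ∈ S`: `dist(z + ε w, S) = ε ‖w‖` for some `ε > 0`,
with the Euclidean distance on `E × ℝ`. -/
def IsProxNormal (S : Set (E × ℝ)) (z w : E × ℝ) : Prop :=
  z ∈ S ∧ ∃ ε : ℝ, 0 < ε ∧ sInf ((fun q => pnorm (z + ε • w - q)) '' S) = ε * pnorm w

/-- `R(f)`: the infimum of `‖x'‖` over points on hyperplanes induced by proximal normals of
the hypograph (`inf ∅ = ∞`). -/
noncomputable def Rrad (f : E → ℝ≥0∞) : ℝ≥0∞ :=
  ⨅ (x' : E) (_ : ∃ p w, IsProxNormal (hypo f) p w ∧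
    ⟪w.1, x'⟫ = ⟪w.1, p.1⟫ + w.2 * p.2), ENNReal.ofReal ‖x'‖

/-- `D(f) = sup{‖x‖ : 0 < f(x) < ∞}`. -/
noncomputable def Drad (f : E → ℝ≥0∞) : ℝ≥0∞ :=
  ⨆ (x : E) (_ : 0 < f x ∧ f x < ⊤), ENNReal.ofReal ‖x‖

/-- The proximal subdifferential of `f` at `x` (empty unless `f x ∈ (0,∞)`). -/
def subdiffP (f : E → ℝ≥0∞) (x : E) : Set E :=
  {ζ | 0 < f x ∧ f x < ⊤ ∧ IsProxNormal (epigraph f) (x, (f x).toReal) (ζ, -1)}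

/-- The proximal supdifferential of `f` at `x` (empty unless `f x ∈ (0,∞)`). -/
def supdiffP (f : E → ℝ≥0∞) (x : E) : Set E :=
  {ζ | 0 < f x ∧ f x < ⊤ ∧ IsProxNormal (hypo f) (x, (f x).toReal) (-ζ, 1)}

/-- `ζ` is a subgradient of `g` at `y`: `g(z) ≥ g(y) + ⟨ζ, z - y⟩` for all `z`. -/
def IsSubgrad (g : E → ℝ≥0∞) (y ζ : E) : Prop :=
  ∀ z : E, (g y : EReal) + ((⟪ζ, z - y⟫ : ℝ) : EReal) ≤ (g z : EReal)

/-- The Minkowski gauge `γ_S(y) = inf{λ > 0 : y ∈ λ S}` (`inf ∅ = ∞`). -/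
noncomputable def gaugeE (S : Set E) (y : E) : ℝ≥0∞ :=
  ⨅ (lam : ℝ) (_ : 0 < lam ∧ y ∈ lam • S), ENNReal.ofReal lam

/-- The indicator `ι_S` taking value `∞` on `S` and `0` elsewhere. -/
noncomputable def indic (S : Set E) (x : E) : ℝ≥0∞ := S.indicator (fun _ => (⊤ : ℝ≥0∞)) x

/-- global sharpness transfers to sharp growth of the radial dual. -/
theorem statement5 (f : E → ℝ≥0∞) (husc : IsUSC f) (hsur : StrictlyUpperRadial f)
    (xs : E) (hxs : 0 < f xs) (hxs' : f xs < ⊤) (C : ℝ) (hC : 0 < C)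
    (hsharp : ∀ x : E, f x ≤ ENNReal.ofReal (max ((f xs).toReal - C * ‖x - xs‖) 0)) :
    ∀ y : E, ENNReal.ofReal (1 / (f xs).toReal +
      (C / (C * ‖xs‖ + (f xs).toReal)) * ‖y - ((f xs).toReal)⁻¹ • xs‖) ≤ radial f y := by
  intro y
  set F := (f xs).toReal with hF
  have hF0 : 0 < F := ENNReal.toReal_pos hxs.ne' hxs'.ne
  have hK : 0 < C * ‖xs‖ + F := by positivity
  set d := ‖y - F⁻¹ • xs‖ with hd
  have hd0 : 0 ≤ d := norm_nonneg _
  set t := C / (C * ‖xs‖ + F) * d with ht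
  have ht0 : 0 ≤ t := by positivity
  have htK : t * (C * ‖xs‖ + F) = C * d := by rw [ht]; field_simp
  have hv : 0 < 1 / F + t := by positivity
  have hvF : (1 / F + t) * F = 1 + t * F := by field_simp
  set v := 1 / F + t with hvdef
  have htri : d ≤ ‖y - v • xs‖ + t * ‖xs‖ := by
    have h : y - F⁻¹ • xs = (y - v • xs) + t • xs := by
      rw [hvdef, add_smul, one_div]; abel
    calc d = ‖(y - v • xs) + t • xs‖ := by rw [hd, h]
      _ ≤ ‖y - v • xs‖ + ‖t • xs‖ := norm_add_le _ _
      _ = _ := by rw [norm_smul, Real.norm_of_nonneg ht0]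
  have hscale : v * ‖v⁻¹ • y - xs‖ = ‖y - v • xs‖ := by
    rw [← Real.norm_of_nonneg hv.le, ← norm_smul, Real.norm_of_nonneg hv.le, smul_sub,
      smul_inv_smul₀ hv.ne']
  refine le_iSup₂_of_le v ⟨hv, ?_⟩ le_rfl
  calc persp f (y, v)
      ≤ ENNReal.ofReal v * ENNReal.ofReal (max (F - C * ‖v⁻¹ • y - xs‖) 0) :=
        mul_le_mul_right (hsharp _) _
    _ = ENNReal.ofReal (v * max (F - C * ‖v⁻¹ • y - xs‖) 0) :=
        (ENNReal.ofReal_mul hv.le).symm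
    _ ≤ 1 := by
        rw [ENNReal.ofReal_le_one, mul_max_of_nonneg _ _ hv.le, mul_zero]
        refine max_le ?_ zero_le_one
        have := mul_le_mul_of_nonneg_left htri hC.le
        linear_combination this + hvF - C * hscale + htK
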